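/- For every integer n ≥ 2, T(n, n-2) = ((5n+1)/24)·binom(2n, 5), where binom denotes the binomial coefficient. -/

import Mathlib

/-- Stirling numbers of the first kind with level 2. -/
def T2 : ℕ → ℕ → ℕ
  | 0, 0 => 1
  | 0, _ + 1 => 0
  | _ + 1, 0 => 0
  | n + 1, m + 1 => T2 n m + n ^ 2 * T2 n (m + 1)

/-!
The recurrence moves along the subdiagonals of the triangle: the increment
`T(n + 1, m + 1) - T(n, m) = n² T(n, m + 1)` on one subdiagonal is a multiple of an entry of the
subdiagonal above it. Starting from `T(n, n) = 1`, two summations give `T(n + 1, n)` and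
`T(n + 2, n)` as polynomials in `n`. The second one contains the factors of
`(2n + 4)(2n + 3)(2n + 2)(2n + 1)(2n)`, which make up the binomial coefficient.
-/

theorem T2_succ_succ (n m : ℕ) : T2 (n + 1) (m + 1) = T2 n m + n ^ 2 * T2 n (m + 1) :=
  rfl

theorem T2_eq_zero_of_lt {n m : ℕ} (h : n < m) : T2 n m = 0 := by
  induction n generalizing m with
  | zero =>
    obtain ⟨m, rfl⟩ := Nat.exists_eq_add_one_of_ne_zero h.ne'
    rfl
  | succ n ih =>
    obtain ⟨m, rfl⟩ := Nat.exists_eq_add_one_of_ne_zero (Nat.ne_zero_of_lt h)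
    have hnm : n < m := Nat.lt_of_succ_lt_succ h
    rw [T2_succ_succ, ih hnm, ih (hnm.trans m.lt_succ_self), mul_zero, add_zero]

theorem T2_self (n : ℕ) : T2 n n = 1 := by
  induction n with
  | zero => rfl
  | succ n ih => rw [T2_succ_succ, ih, T2_eq_zero_of_lt n.lt_succ_self, mul_zero, add_zero]

theorem six_mul_T2_succ_self (n : ℕ) : 6 * T2 (n + 1) n = n * (n + 1) * (2 * n + 1) := by
  induction n with
  | zero => rfl
  | succ n ih =>
    calc 6 * T2 (n + 1 + 1) (n + 1)
        = 6 * T2 (n + 1) n + 6 * (n + 1) ^ 2 := by rw [T2_succ_succ, T2_self]; ring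
      _ = (n + 1) * (n + 1 + 1) * (2 * (n + 1) + 1) := by rw [ih]; ring

theorem three_hundred_sixty_mul_T2_add_two_self (n : ℕ) :
    360 * T2 (n + 2) n =
      (5 * n + 11) * (n * (n + 1) * (n + 2) * (2 * n + 1) * (2 * n + 3)) := by
  induction n with
  | zero => rfl
  | succ n ih =>
    calc 360 * T2 (n + 2 + 1) (n + 1)
        = 360 * T2 (n + 2) n + 60 * (n + 2) ^ 2 * (6 * T2 (n + 1 + 1) (n + 1)) := by
          rw [T2_succ_succ]; ring
      _ = (5 * (n + 1) + 11) *
            ((n + 1) * (n + 1 + 1) * (n + 1 + 2) * (2 * (n + 1) + 1) * (2 * (n + 1) + 3)) := by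
          rw [ih, six_mul_T2_succ_self]; ring

theorem fifteen_mul_choose_two_mul_add_four_five (n : ℕ) :
    15 * (2 * n + 4).choose 5 = n * (n + 1) * (n + 2) * (2 * n + 1) * (2 * n + 3) := by
  have h : (2 * n + 4).descFactorial 5 = 120 * (2 * n + 4).choose 5 :=
    Nat.descFactorial_eq_factorial_mul_choose _ 5
  simp only [Nat.succ_descFactorial_succ, Nat.descFactorial_one] at h
  linarith

theorem twenty_four_mul_T2_add_two_self (n : ℕ) :
    24 * T2 (n + 2) n = (5 * n + 11) * (2 * n + 4).choose 5 := by
  have hT := three_hundred_sixty_mul_T2_add_two_self n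
  rw [← fifteen_mul_choose_two_mul_add_four_five] at hT
  linarith

theorem statement19 (n : ℕ) (hn : 2 ≤ n) :
    (T2 n (n - 2) : ℚ) = (5 * (n : ℚ) + 1) / 24 * (Nat.choose (2 * n) 5 : ℚ) := by
  obtain ⟨k, rfl⟩ := Nat.exists_eq_add_of_le' hn
  have h : (24 * T2 (k + 2) k : ℚ) = (5 * k + 11) * (2 * (k + 2)).choose 5 := by
    exact_mod_cast twenty_four_mul_T2_add_two_self k
  rw [Nat.add_sub_cancel]
  push_cast
  linear_combination h / 24
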